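/- arXiv:1906.00191 — 2 statements merged into one kernel-verified Lean document; each statement's English description precedes it below -/
import Mathlib

section
/- Let P = B ∪ R be a 1-avoiding point set in general position with |B| = |R| = n, where B and R are separable by a line and B avoids R. Then there exists a bijection σ : B → R such that the n segments [b, σ(b)], for b ∈ B, form a stabbing family. -/
open Set

abbrev Pt : Type := ℝ × ℝ

/-- Signed area determinant of the triple `(p, q, r)`. -/
def det2 (p q r : Pt) : ℝ :=
  (q.1 - p.1) * (r.2 - p.2) - (q.2 - p.2) * (r.1 - p.1)

/-- `P` is in general position: no three distinct points of `P` are collinear. -/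
def GenPos (P : Set Pt) : Prop :=
  ∀ p ∈ P, ∀ q ∈ P, ∀ r ∈ P, p ≠ q → p ≠ r → q ≠ r →
    ¬ Collinear ℝ ({p, q, r} : Set Pt)

/-- `A` and `B` can be separated by a line. -/
def LineSeparated (A B : Set Pt) : Prop :=
  ∃ a b c : ℝ, (a, b) ≠ ((0 : ℝ), (0 : ℝ)) ∧
    (∀ p ∈ A, a * p.1 + b * p.2 < c) ∧ (∀ p ∈ B, c < a * p.1 + b * p.2)

/-- `A` avoids `B`: no line through two distinct points of `A` meets the convex hull
of `B`. -/
def Avoids (A B : Set Pt) : Prop :=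
  ∀ p ∈ A, ∀ q ∈ A, p ≠ q → ∀ x ∈ convexHull ℝ B, det2 p q x ≠ 0

/-- `B ∪ R` is a `1`-avoiding point set with colour classes of size `n`. -/
def OneAvoiding (n : ℕ) (B R : Finset Pt) : Prop :=
  Disjoint B R ∧ B.card = n ∧ R.card = n ∧ GenPos (↑B ∪ ↑R) ∧ LineSeparated ↑B ↑R ∧
    Avoids ↑B ↑R

/-- The line through the two points `p` and `q`. -/
def lineThrough (p q : Pt) : Set Pt := {z | det2 p q z = 0}

theorem det2_antisymm (p q z : Pt) : det2 q p z = - det2 p q z := by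
  simp only [det2]; ring

theorem lineThrough_symm (p q : Pt) : lineThrough p q = lineThrough q p := by
  ext z
  simp only [lineThrough, Set.mem_setOf_eq]
  rw [det2_antisymm p q z, neg_eq_zero]

/-- The open segment (relative interior) of an unordered pair of points. -/
def segOpen : Sym2 Pt → Set Pt :=
  Sym2.lift ⟨fun p q => openSegment ℝ p q, fun p q => openSegment_symm ℝ p q⟩

/-- The line through the two endpoints of an unordered pair of points. -/
def segLine : Sym2 Pt → Set Pt :=
  Sym2.lift ⟨fun p q => lineThrough p q, fun p q => lineThrough_symm p q⟩

/-- `F` is a stabbing family: a finite set of nondegenerate segments, all of whose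
endpoints are distinct, such that for every two distinct segments `e` and `f`, the line
through the endpoints of `e` meets the open segment of `f`, or the line through the
endpoints of `f` meets the open segment of `e`. -/
def IsStabbingFamily (F : Finset (Sym2 Pt)) : Prop :=
  (∀ s ∈ F, ¬ s.IsDiag) ∧
  (∀ s ∈ F, ∀ t ∈ F, s ≠ t → ∀ x ∈ s, ∀ y ∈ t, x ≠ y) ∧
  (∀ s ∈ F, ∀ t ∈ F, s ≠ t →
    (segLine s ∩ segOpen t).Nonempty ∨ (segLine t ∩ segOpen s).Nonempty)

/-!
The matching is built greedily. Seen from any point of `R`, the set `B` lies strictly inside a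
half-plane, so some point `b` comes first in angular order; since `B` avoids `R`, the same `b` is
first as seen from every point of `R`. Let `r` be the first point of `R` in angular order around
`b`, and the farthest one from `b` in case of ties. The line `br` has the rest of `B` on one side.
Any other point `s` of `R` lies either on the other side, and then the line `br` stabs every
segment from `B \ {b}` to `s`, or inside the segment `br`, which is then stabbed at `s` by the
line through any such segment. Hence `b` can be matched to `r` and both removed.
-/

/-- Two segments stab one another: the line through the endpoints of one of them (either one)
meets the open segment of the other. This is the pairwise condition in `IsStabbingFamily`. -/
def Stabbing (s t : Sym2 Pt) : Prop :=
  (segLine s ∩ segOpen t).Nonempty ∨ (segLine t ∩ segOpen s).Nonempty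

theorem Stabbing.symm {s t : Sym2 Pt} (h : Stabbing s t) : Stabbing t s :=
  Or.symm h

theorem det2_rotate (p q r : Pt) : det2 q r p = det2 p q r := by
  simp only [det2]; ring

theorem det2_swap_right (p q r : Pt) : det2 p r q = -det2 p q r := by
  simp only [det2]; ring

theorem det2_add_smul (p q x y : Pt) {u v : ℝ} (huv : u + v = 1) :
    det2 p q (u • x + v • y) = u * det2 p q x + v * det2 p q y := by
  obtain rfl : u = 1 - v := eq_sub_of_add_eq huv
  simp only [det2, Prod.fst_add, Prod.snd_add, Prod.smul_fst, Prod.smul_snd, smul_eq_mul]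
  ring

theorem det2_eq_zero_of_mem_segment {p q x : Pt} (hx : x ∈ segment ℝ p q) : det2 p q x = 0 := by
  obtain ⟨u, v, -, -, huv, rfl⟩ := hx
  rw [det2_add_smul p q p q huv]
  simp only [det2]
  ring

theorem right_mem_lineThrough (p q : Pt) : q ∈ lineThrough p q :=
  det2_eq_zero_of_mem_segment (right_mem_segment ℝ p q)

theorem lineThrough_inter_openSegment_nonempty {p q x y : Pt}
    (hx : det2 p q x < 0) (hy : 0 < det2 p q y) :
    (lineThrough p q ∩ openSegment ℝ x y).Nonempty := by
  have hd : 0 < det2 p q y - det2 p q x := by linarith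
  have hsum : det2 p q y / (det2 p q y - det2 p q x) +
      -det2 p q x / (det2 p q y - det2 p q x) = 1 := by
    field_simp
    ring
  refine ⟨_, ?_, _, _, div_pos hy hd, div_pos (neg_pos.2 hx) hd, hsum, rfl⟩
  rw [lineThrough, Set.mem_ofPred_eq, det2_add_smul p q x y hsum]
  field_simp
  ring

theorem mem_segment_of_det2_eq_zero {p m s : Pt} {a b : ℝ} (hdet : det2 p m s = 0)
    (hps : a * p.1 + b * p.2 < a * s.1 + b * s.2)
    (hsm : a * s.1 + b * s.2 ≤ a * m.1 + b * m.2) : s ∈ segment ℝ p m := by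
  rw [segment_eq_image']
  have hs : 0 < a * (s.1 - p.1) + b * (s.2 - p.2) := by linarith
  have hm : 0 < a * (m.1 - p.1) + b * (m.2 - p.2) := by linarith
  refine ⟨(a * (s.1 - p.1) + b * (s.2 - p.2)) / (a * (m.1 - p.1) + b * (m.2 - p.2)),
    ⟨by positivity, (div_le_one hm).2 (by linarith)⟩, ?_⟩
  simp only [det2] at hdet
  ext
  · simp only [Prod.fst_add, Prod.smul_fst, Prod.fst_sub, smul_eq_mul]
    field_simp
    linear_combination b * hdet
  · simp only [Prod.snd_add, Prod.smul_snd, Prod.snd_sub, smul_eq_mul]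
    field_simp
    linear_combination -a * hdet

namespace LineSeparated

variable {A A' B B' : Set Pt}

theorem symm (h : LineSeparated A B) : LineSeparated B A := by
  obtain ⟨a, b, c, hab, hA, hB⟩ := h
  refine ⟨-a, -b, -c, ?_, fun p hp => ?_, fun p hp => ?_⟩
  · simpa using hab
  · linarith [hB p hp]
  · linarith [hA p hp]

theorem mono (h : LineSeparated A B) (hA : A' ⊆ A) (hB : B' ⊆ B) : LineSeparated A' B' := by
  obtain ⟨a, b, c, hab, hltA, hltB⟩ := h
  exact ⟨a, b, c, hab, fun p hp => hltA p (hA hp), fun p hp => hltB p (hB hp)⟩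

theorem disjoint (h : LineSeparated A B) : Disjoint A B := by
  obtain ⟨a, b, c, -, hA, hB⟩ := h
  exact Set.disjoint_left.2 fun p hpA hpB => lt_asymm (hA p hpA) (hB p hpB)

theorem exists_det2_pos_or_mem_segment {p : Pt} {S : Finset Pt} (h : LineSeparated {p} ↑S)
    (hS : S.Nonempty) : ∃ m ∈ S, ∀ s ∈ S, 0 < det2 p m s ∨ s ∈ segment ℝ p m := by
  obtain ⟨a, b, c, hab, hpc, hcS⟩ := h
  have hp : a * p.1 + b * p.2 < c := hpc p rfl
  let height (s : Pt) : ℝ := a * (s.1 - p.1) + b * (s.2 - p.2)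
  let shift (s : Pt) : ℝ := a * (s.2 - p.2) - b * (s.1 - p.1)
  have height_pos : ∀ s ∈ S, 0 < height s := fun s hs => by
    linarith [hcS s hs, show height s = a * s.1 + b * s.2 - (a * p.1 + b * p.2) by ring]
  have sq_add_sq_pos : 0 < a ^ 2 + b ^ 2 := by
    by_contra! hle
    exact hab (Prod.ext (by nlinarith) (by nlinarith))
  have sq_add_sq_mul_det2 (m s : Pt) :
      (a ^ 2 + b ^ 2) * det2 p m s = shift s * height m - shift m * height s := by
    simp only [det2, height, shift]
    ring
  -- The least slope around `p`, and the greatest distance from `p` in case of ties.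
  obtain ⟨m, hm, hmin⟩ :=
    S.exists_min_image (fun s => toLex (shift s / height s, -height s)) hS
  refine ⟨m, hm, fun s hs => ?_⟩
  rcases Prod.Lex.toLex_le_toLex.1 (hmin s hs) with hlt | ⟨heq, hle⟩
  · rw [div_lt_div_iff₀ (height_pos m hm) (height_pos s hs)] at hlt
    have hpos : 0 < (a ^ 2 + b ^ 2) * det2 p m s := by
      rw [sq_add_sq_mul_det2]
      exact sub_pos.2 hlt
    exact Or.inl (pos_of_mul_pos_right hpos sq_add_sq_pos.le)
  · rw [div_eq_div_iff (height_pos m hm).ne' (height_pos s hs).ne'] at heq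
    have hdet : det2 p m s = 0 :=
      (mul_eq_zero_iff_left sq_add_sq_pos.ne').1 (by rw [sq_add_sq_mul_det2, heq, sub_self])
    refine Or.inr (mem_segment_of_det2_eq_zero hdet (hp.trans (hcS s hs)) ?_)
    simp only [height] at hle
    linarith

end LineSeparated

namespace Avoids

variable {A A' B B' : Set Pt}

theorem mono (h : Avoids A B) (hA : A' ⊆ A) (hB : B' ⊆ B) : Avoids A' B' :=
  fun p hp q hq hpq x hx => h p (hA hp) q (hA hq) hpq x (convexHull_mono hB hx)

theorem det2_pos (h : Avoids A B) {p q : Pt} (hp : p ∈ A) (hq : q ∈ A) (hpq : p ≠ q)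
    {x y : Pt} (hx : x ∈ B) (hy : y ∈ B) (hpos : 0 < det2 p q x) : 0 < det2 p q y := by
  have hx' : x ∈ convexHull ℝ B := subset_convexHull ℝ B hx
  have hy' : y ∈ convexHull ℝ B := subset_convexHull ℝ B hy
  by_contra! hle
  have hneg : det2 p q y < 0 := hle.lt_of_ne (h p hp q hq hpq y hy')
  obtain ⟨z, hz_line, hz_seg⟩ := lineThrough_inter_openSegment_nonempty hneg hpos
  exact h p hp q hq hpq z ((convex_convexHull ℝ B).openSegment_subset hy' hx' hz_seg) hz_line

theorem exists_forall_det2_pos {B R : Finset Pt} (hav : Avoids ↑B ↑R)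
    (hsep : LineSeparated ↑B ↑R) (hB : B.Nonempty) (hR : R.Nonempty) :
    ∃ b ∈ B, ∀ q ∈ B, q ≠ b → ∀ r ∈ R, 0 < det2 b q r := by
  obtain ⟨r₀, hr₀⟩ := hR
  obtain ⟨b, hb, hfirst⟩ := (hsep.symm.mono (Set.singleton_subset_iff.2 hr₀)
    Set.Subset.rfl).exists_det2_pos_or_mem_segment hB
  refine ⟨b, hb, fun q hq hqb r hr => hav.det2_pos hb hq hqb.symm hr₀ hr ?_⟩
  rw [det2_rotate]
  refine (hfirst q hq).resolve_right fun hseg => ?_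
  refine hav b hb q hq hqb.symm r₀ (subset_convexHull ℝ _ hr₀) ?_
  rw [det2_rotate, det2_eq_zero_of_mem_segment hseg]

theorem exists_pair_stabbing_of_ne {B R : Finset Pt} (hav : Avoids ↑B ↑R)
    (hsep : LineSeparated ↑B ↑R) (hB : B.Nonempty) (hR : R.Nonempty) :
    ∃ b ∈ B, ∃ r ∈ R, ∀ q ∈ B, q ≠ b → ∀ s ∈ R, s ≠ r → Stabbing s(b, r) s(q, s) := by
  obtain ⟨b, hb, hbfirst⟩ := hav.exists_forall_det2_pos hsep hB hR
  obtain ⟨r, hr, hrfirst⟩ := (hsep.mono (Set.singleton_subset_iff.2 hb)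
    Set.Subset.rfl).exists_det2_pos_or_mem_segment hR
  refine ⟨b, hb, r, hr, fun q hq hqb s hs hsr => ?_⟩
  rcases hrfirst s hs with hpos | hseg
  · have hneg : det2 b r q < 0 := by
      rw [det2_swap_right]
      exact neg_neg_of_pos (hbfirst q hq hqb r hr)
    exact Or.inl (lineThrough_inter_openSegment_nonempty hneg hpos)
  · have hbs : b ≠ s := hsep.disjoint.ne_of_mem hb hs
    exact Or.inr ⟨s, right_mem_lineThrough q s, mem_openSegment_of_ne_left_right hbs hsr.symm hseg⟩

end Avoids

theorem bijOn_update_of_bijOn_erase {α β : Type*} [DecidableEq α] [DecidableEq β]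
    {B : Finset α} {R : Finset β} {b : α} {r : β} {σ : α → β} (hb : b ∈ B) (hr : r ∈ R)
    (hσ : Set.BijOn σ ↑(B.erase b) ↑(R.erase r)) :
    Set.BijOn (Function.update σ b r) ↑B ↑R := by
  have hcongr : Set.BijOn (Function.update σ b r) ↑(B.erase b) ↑(R.erase r) :=
    hσ.congr fun q hq => (Function.update_of_ne (Finset.ne_of_mem_erase hq) r σ).symm
  have hinsert := hcongr.insert (a := b) (by simp)
  rwa [Function.update_self, ← Finset.coe_insert, ← Finset.coe_insert, Finset.insert_erase hb,
    Finset.insert_erase hr] at hinsert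

theorem exists_bijOn_pairwise_of_exists_pair {α β : Type*} [Nonempty β]
    {T : α × β → α × β → Prop} (hT : ∀ e f, T e f → T f e) {B : Finset α} {R : Finset β}
    (hcard : B.card = R.card)
    (hpair : ∀ B' ⊆ B, ∀ R' ⊆ R, B'.Nonempty → R'.Nonempty → ∃ b ∈ B', ∃ r ∈ R',
      ∀ q ∈ B', q ≠ b → ∀ s ∈ R', s ≠ r → T (b, r) (q, s)) :
    ∃ σ : α → β, Set.BijOn σ ↑B ↑R ∧
      (B : Set α).Pairwise fun p q => T (p, σ p) (q, σ q) := by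
  classical
  induction hn : B.card generalizing B R with
  | zero =>
    obtain rfl : B = ∅ := Finset.card_eq_zero.1 hn
    obtain rfl : R = ∅ := Finset.card_eq_zero.1 (hcard.symm.trans hn)
    exact ⟨fun _ => Classical.arbitrary β, by simp, by simp⟩
  | succ n ih =>
    obtain ⟨b, hb, r, hr, hbr⟩ := hpair B subset_rfl R subset_rfl
      (Finset.card_pos.1 (by omega)) (Finset.card_pos.1 (by omega))
    have hBcard := Finset.card_erase_add_one hb
    have hRcard := Finset.card_erase_add_one hr
    obtain ⟨σ, hσ, hpw⟩ := ih (B := B.erase b) (R := R.erase r) (by omega)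
      (fun B' hB' R' hR' => hpair B' (hB'.trans (B.erase_subset b)) R'
        (hR'.trans (R.erase_subset r))) (by omega)
    have hupdate : Set.EqOn (Function.update σ b r) σ ↑(B.erase b) := fun q hq =>
      Function.update_of_ne (Finset.ne_of_mem_erase hq) r σ
    refine ⟨Function.update σ b r, bijOn_update_of_bijOn_erase hb hr hσ, ?_⟩
    have : Std.Symm fun p q => T (p, Function.update σ b r p) (q, Function.update σ b r q) :=
      ⟨fun _ _ => hT _ _⟩
    rw [← Finset.insert_erase hb, Finset.coe_insert, Set.pairwise_insert_of_symm]
    refine ⟨fun p hp q hq hpq => ?_, fun q hq _ => ?_⟩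
    · simpa only [hupdate hp, hupdate hq] using hpw hp hq hpq
    · obtain ⟨hqb, hqB⟩ := Finset.mem_erase.1 hq
      obtain ⟨hσqr, hσqR⟩ := Finset.mem_erase.1 (hσ.mapsTo hq)
      rw [Function.update_self, hupdate hq]
      exact hbr q hqB hqb (σ q) hσqR hσqr

theorem isStabbingFamily_image [DecidableEq (Sym2 Pt)] {B : Finset Pt} {R : Set Pt}
    {σ : Pt → Pt} (hdisj : Disjoint ↑B R) (hmaps : Set.MapsTo σ ↑B R) (hinj : Set.InjOn σ ↑B)
    (hstab : (B : Set Pt).Pairwise fun p q => Stabbing s(p, σ p) s(q, σ q)) :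
    IsStabbingFamily (B.image fun b => s(b, σ b)) := by
  have hne : ∀ p ∈ B, ∀ q ∈ B, p ≠ σ q := fun p hp q hq => hdisj.ne_of_mem hp (hmaps hq)
  simp only [IsStabbingFamily, Finset.forall_mem_image, Sym2.mk_isDiag_iff, Sym2.mem_iff]
  refine ⟨fun p hp => hne p hp p hp, fun p hp q hq hpq => ?_, fun p hp q hq hpq => ?_⟩
  · have hpq' : p ≠ q := ne_of_apply_ne (fun b => s(b, σ b)) hpq
    rintro x (rfl | rfl) y (rfl | rfl)
    · exact hpq'
    · exact hne _ hp _ hq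
    · exact (hne _ hq _ hp).symm
    · exact hinj.ne hp hq hpq'
  · exact hstab hp hq (ne_of_apply_ne (fun b => s(b, σ b)) hpq)

open scoped Classical in
theorem oneAvoiding_exists_stabbing_perfect_matching_general {B R : Finset Pt}
    (hcard : B.card = R.card) (hsep : LineSeparated ↑B ↑R) (hav : Avoids ↑B ↑R) :
    ∃ σ : Pt → Pt, Set.BijOn σ ↑B ↑R ∧
      IsStabbingFamily (B.image fun b => s(b, σ b)) := by
  obtain ⟨σ, hσ, hstab⟩ := exists_bijOn_pairwise_of_exists_pair
    (T := fun e f => Stabbing s(e.1, e.2) s(f.1, f.2)) (fun _ _ => Stabbing.symm) hcard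
    fun B' hB' R' hR' => (hav.mono (Finset.coe_subset.2 hB')
      (Finset.coe_subset.2 hR')).exists_pair_stabbing_of_ne (hsep.mono hB' hR')
  exact ⟨σ, hσ, isStabbingFamily_image hsep.disjoint hσ.mapsTo hσ.injOn hstab⟩

open scoped Classical in
theorem oneAvoiding_exists_stabbing_perfect_matching
    (n : ℕ) (hn : 0 < n) (B R : Finset Pt) (h : OneAvoiding n B R) :
    ∃ σ : Pt → Pt, Set.BijOn σ ↑B ↑R ∧
      IsStabbingFamily (B.image fun b => s(b, σ b)) := by
  obtain ⟨-, hB, hR, -, hsep, hav⟩ := h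
  exact oneAvoiding_exists_stabbing_perfect_matching_general (hB.trans hR.symm) hsep hav
end

section
/- For every positive integer n and every set P of 2n points in general position in the plane, there exists a partition of P into n pairs such that the n segments joining the points of each pair form a stabbing family. -/
open Set

/-!
Among all perfect matchings of `P`, take one of maximal total Euclidean length. If two of its
segments `ab` and `cd` do not stab each other, then `ab` and `cd` are opposite sides of a (possibly
degenerate) convex quadrilateral, whose diagonals are `ac` and `bd`, or `ad` and `bc`. By the
triangle inequality through the point where the diagonals meet, the diagonals are together longer
than `ab` and `cd`, strictly because `ab` and `cd` are disjoint. Exchanging the two segments for the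
diagonals then contradicts maximality.
-/

section Metric

theorem dist_add_dist_lt_of_mem_segment {E : Type*} [NormedAddCommGroup E] [NormedSpace ℝ E]
    [StrictConvexSpace ℝ E] {a b c d x : E} (hac : x ∈ segment ℝ a c) (hbd : x ∈ segment ℝ b d)
    (hdisj : Disjoint (segment ℝ a b) (segment ℝ c d)) :
    dist a b + dist c d < dist a c + dist b d := by
  have split_ac : dist a x + dist x c = dist a c := (mem_segment_iff_wbtw.1 hac).dist_add_dist
  have split_bd : dist b x + dist x d = dist b d := (mem_segment_iff_wbtw.1 hbd).dist_add_dist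
  have triangle_ab : dist a b ≤ dist a x + dist b x := dist_triangle_right a b x
  have triangle_cd : dist c d ≤ dist x c + dist x d := dist_triangle_left c d x
  by_contra! hle
  have hab : x ∈ segment ℝ a b := by
    rw [mem_segment_iff_wbtw, ← dist_add_dist_eq_iff, dist_comm x b]
    linarith
  have hcd : x ∈ segment ℝ c d := by
    rw [mem_segment_iff_wbtw, ← dist_add_dist_eq_iff, dist_comm c x]
    linarith
  exact disjoint_left.1 hdisj hab hcd

/-- The Euclidean distance of two points of the plane; the distance that `Pt` inherits as a product
is the sup distance, which is not strictly convex. -/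
noncomputable def euclideanDist (p q : Pt) : ℝ :=
  dist (WithLp.toLp 2 p) (WithLp.toLp 2 q)

theorem euclideanDist_comm (p q : Pt) : euclideanDist p q = euclideanDist q p :=
  dist_comm _ _

theorem euclideanDist_add_lt_of_segment_inter_segment {a b c d : Pt}
    (hmeet : (segment ℝ a c ∩ segment ℝ b d).Nonempty)
    (hdisj : Disjoint (segment ℝ a b) (segment ℝ c d)) :
    euclideanDist a b + euclideanDist c d < euclideanDist a c + euclideanDist b d := by
  obtain ⟨x, hac, hbd⟩ := hmeet
  let toPlane : Pt ≃ₗ[ℝ] WithLp 2 Pt := (WithLp.linearEquiv 2 ℝ Pt).symm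
  have image_toPlane_segment (p q : Pt) :
      toPlane '' segment ℝ p q = segment ℝ (toPlane p) (toPlane q) :=
    image_segment ℝ toPlane.toLinearMap.toAffineMap p q
  refine dist_add_dist_lt_of_mem_segment (x := toPlane x) ?_ ?_ ?_
  · exact image_toPlane_segment a c ▸ mem_image_of_mem toPlane hac
  · exact image_toPlane_segment b d ▸ mem_image_of_mem toPlane hbd
  · have := (disjoint_image_iff toPlane.injective).2 hdisj
    rwa [image_toPlane_segment, image_toPlane_segment] at this

end Metric

section Plane

theorem zero_mem_openSegment_of_mul_neg {𝕜 : Type*} [Field 𝕜] [LinearOrder 𝕜]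
    [IsStrictOrderedRing 𝕜] {u v : 𝕜} (h : u * v < 0) : (0 : 𝕜) ∈ openSegment 𝕜 u v := by
  have hne : u ≠ v := by
    rintro rfl
    exact (mul_self_nonneg u).not_gt h
  rw [openSegment_eq_Ioo' hne, mem_Ioo, min_lt_iff, lt_max_iff]
  rcases mul_neg_iff.1 h with ⟨hu, hv⟩ | ⟨hu, hv⟩
  · exact ⟨.inr hv, .inl hu⟩
  · exact ⟨.inl hu, .inr hv⟩

variable {a b c d : Pt}

theorem det2_add_smul_s19 {α β : ℝ} (hαβ : α + β = 1) :
    det2 a b (α • c + β • d) = α * det2 a b c + β * det2 a b d := by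
  obtain rfl : α = 1 - β := by linarith
  simp only [det2, Prod.fst_add, Prod.snd_add, Prod.smul_fst, Prod.smul_snd, smul_eq_mul]
  ring

theorem segment_subset_lineThrough (a b : Pt) : segment ℝ a b ⊆ lineThrough a b := by
  rintro _ ⟨α, β, -, -, hαβ, rfl⟩
  rw [lineThrough, mem_ofPred_eq, det2_add_smul_s19 hαβ]
  simp only [det2]
  ring

theorem zero_notMem_openSegment_det2_of_disjoint
    (h : Disjoint (lineThrough a b) (openSegment ℝ c d)) :
    (0 : ℝ) ∉ openSegment ℝ (det2 a b c) (det2 a b d) := by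
  rintro ⟨α, β, hα, hβ, hαβ, hzero⟩
  refine disjoint_left.1 h ?_ ⟨α, β, hα, hβ, hαβ, rfl⟩
  rwa [lineThrough, mem_ofPred_eq, det2_add_smul_s19 hαβ]

theorem det2_nonneg_of_disjoint_lineThrough
    (h : Disjoint (lineThrough a b) (openSegment ℝ c d)) :
    (0 ≤ det2 a b c ∧ 0 ≤ det2 a b d ∧ 0 < det2 a b c + det2 a b d) ∨
      (0 ≤ det2 b a c ∧ 0 ≤ det2 b a d ∧ 0 < det2 b a c + det2 b a d) := by
  have hzero := zero_notMem_openSegment_det2_of_disjoint h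
  have hmul : 0 ≤ det2 a b c * det2 a b d :=
    not_lt.1 fun hneg => hzero (zero_mem_openSegment_of_mul_neg hneg)
  have hsum : det2 a b c + det2 a b d ≠ 0 := fun hsum =>
    hzero ⟨1 / 2, 1 / 2, by norm_num, by norm_num, by norm_num, by
      rw [smul_eq_mul, smul_eq_mul, ← mul_add, hsum, mul_zero]⟩
  rw [det2_antisymm a b c, det2_antisymm a b d]
  rcases mul_nonneg_iff.1 hmul with ⟨hc, hd⟩ | ⟨hc, hd⟩
  · exact .inl ⟨hc, hd, lt_of_le_of_ne (add_nonneg hc hd) hsum.symm⟩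
  · refine .inr ⟨neg_nonneg.2 hc, neg_nonneg.2 hd, ?_⟩
    rw [← neg_add]
    exact neg_pos.2 (lt_of_le_of_ne (add_nonpos hc hd) hsum)

-- The barycentric coordinates of the crossing point on `ac` and on `bd` are ratios of areas with
-- the common denominator `det2 a b c + det2 c d a = det2 a b d + det2 c d b`.
theorem segment_inter_segment_nonempty_of_det2_nonneg
    (habc : 0 ≤ det2 a b c) (habd : 0 ≤ det2 a b d) (hcda : 0 ≤ det2 c d a)
    (hcdb : 0 ≤ det2 c d b) (hpos : 0 < det2 a b c + det2 a b d) :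
    (segment ℝ a c ∩ segment ℝ b d).Nonempty := by
  have area_eq : det2 a b c + det2 c d a = det2 a b d + det2 c d b := by
    simp only [det2]
    ring
  set area := det2 a b d + det2 c d b with area_def
  have area_pos : 0 < area := by linarith
  have coord_sum {u v : ℝ} (h : u + v = area) : v / area + u / area = 1 := by
    rw [← add_div, add_comm, h, div_self area_pos.ne']
  refine ⟨(det2 c d b / area) • a + (det2 a b d / area) • c,
    ⟨_, _, by positivity, by positivity, coord_sum area_def.symm, rfl⟩,
    ⟨det2 c d a / area, det2 a b c / area, by positivity, by positivity, coord_sum area_eq, ?_⟩⟩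
  ext <;>
  · simp only [Prod.fst_add, Prod.snd_add, Prod.smul_fst, Prod.smul_snd, smul_eq_mul]
    field_simp
    simp only [det2]
    ring

theorem diagonals_inter_nonempty_of_disjoint_lineThrough
    (hab : Disjoint (lineThrough a b) (openSegment ℝ c d))
    (hcd : Disjoint (lineThrough c d) (openSegment ℝ a b)) :
    (segment ℝ a c ∩ segment ℝ b d).Nonempty ∨ (segment ℝ a d ∩ segment ℝ b c).Nonempty := by
  rcases det2_nonneg_of_disjoint_lineThrough hab with ⟨hc, hd, hpos⟩ | ⟨hc, hd, hpos⟩ <;>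
  rcases det2_nonneg_of_disjoint_lineThrough hcd with ⟨ha, hb, -⟩ | ⟨ha, hb, -⟩
  · exact .inl (segment_inter_segment_nonempty_of_det2_nonneg hc hd ha hb hpos)
  · rw [add_comm] at hpos
    exact .inr (segment_inter_segment_nonempty_of_det2_nonneg hd hc ha hb hpos)
  · rw [inter_comm (segment ℝ a d)]
    exact .inr (segment_inter_segment_nonempty_of_det2_nonneg hc hd hb ha hpos)
  · rw [add_comm] at hpos
    rw [inter_comm (segment ℝ a c)]
    exact .inl (segment_inter_segment_nonempty_of_det2_nonneg hd hc hb ha hpos)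

theorem disjoint_segment_of_disjoint_lineThrough (hac : a ≠ c) (had : a ≠ d) (hbc : b ≠ c)
    (hbd : b ≠ d) (hab : Disjoint (lineThrough a b) (openSegment ℝ c d))
    (hcd : Disjoint (lineThrough c d) (openSegment ℝ a b)) :
    Disjoint (segment ℝ a b) (segment ℝ c d) := by
  refine disjoint_left.2 fun x hxab hxcd => ?_
  have endpoint_cd := disjoint_left.1 hab (segment_subset_lineThrough a b hxab)
  have endpoint_ab := disjoint_left.1 hcd (segment_subset_lineThrough c d hxcd)
  rw [← insert_endpoints_openSegment] at hxab hxcd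
  rcases hxab with rfl | rfl | hxab
  · rcases hxcd with rfl | rfl | hxcd
    exacts [hac rfl, had rfl, endpoint_cd hxcd]
  · rcases hxcd with rfl | rfl | hxcd
    exacts [hbc rfl, hbd rfl, endpoint_cd hxcd]
  · exact endpoint_ab hxab

theorem lineThrough_inter_openSegment_nonempty_of_exchange_le (hac : a ≠ c) (had : a ≠ d)
    (hbc : b ≠ c) (hbd : b ≠ d)
    (hle : euclideanDist a c + euclideanDist b d ≤ euclideanDist a b + euclideanDist c d)
    (hle' : euclideanDist a d + euclideanDist c b ≤ euclideanDist a b + euclideanDist c d) :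
    (lineThrough a b ∩ openSegment ℝ c d).Nonempty ∨
      (lineThrough c d ∩ openSegment ℝ a b).Nonempty := by
  by_contra! hempty
  have hab := disjoint_iff_inter_eq_empty.2 hempty.1
  have hcd := disjoint_iff_inter_eq_empty.2 hempty.2
  have hdisj := disjoint_segment_of_disjoint_lineThrough hac had hbc hbd hab hcd
  rcases diagonals_inter_nonempty_of_disjoint_lineThrough hab hcd with hmeet | hmeet
  · exact (euclideanDist_add_lt_of_segment_inter_segment hmeet hdisj).not_ge hle
  · rw [segment_symm ℝ c d] at hdisj
    have hlt := euclideanDist_add_lt_of_segment_inter_segment hmeet hdisj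
    rw [euclideanDist_comm d c, euclideanDist_comm b c] at hlt
    exact hlt.not_ge hle'

end Plane

section Matching

variable {ι α : Type*}

theorem add_le_add_of_sum_le_sum_of_eq_off_pair {M : Type*} [Fintype ι] [AddCommMonoid M]
    [PartialOrder M] [IsOrderedCancelAddMonoid M] {f g : ι → M} {i j : ι} (hij : i ≠ j)
    (heq : ∀ k, k ≠ i → k ≠ j → f k = g k) (hle : ∑ k, f k ≤ ∑ k, g k) :
    f i + f j ≤ g i + g j := by
  classical
  have hcompl : ∑ k ∈ {i, j}ᶜ, f k = ∑ k ∈ {i, j}ᶜ, g k := by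
    refine Finset.sum_congr rfl fun k hk => ?_
    simp only [Finset.mem_compl, Finset.mem_insert, Finset.mem_singleton, not_or] at hk
    exact heq k hk.1 hk.2
  rw [← Finset.sum_add_sum_compl {i, j} f, ← Finset.sum_add_sum_compl {i, j} g, hcompl,
    Finset.sum_pair hij, Finset.sum_pair hij] at hle
  exact le_of_add_le_add_right hle

open Sum in
theorem exists_equiv_exchange_le {M : Type*} [Finite ι] [AddCommMonoid M] [LinearOrder M]
    [IsOrderedCancelAddMonoid M] (e : ι ⊕ ι ≃ α) (w : α → α → M) :
    ∃ f : ι ⊕ ι ≃ α, ∀ i j, i ≠ j →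
      w (f (inl i)) (f (inl j)) + w (f (inr i)) (f (inr j)) ≤
          w (f (inl i)) (f (inr i)) + w (f (inl j)) (f (inr j)) ∧
        w (f (inl i)) (f (inr j)) + w (f (inl j)) (f (inr i)) ≤
          w (f (inl i)) (f (inr i)) + w (f (inl j)) (f (inr j)) := by
  classical
  have := Fintype.ofFinite ι
  have : Nonempty (ι ⊕ ι ≃ α) := ⟨e⟩
  obtain ⟨f, hmax⟩ := Finite.exists_max
    fun g : ι ⊕ ι ≃ α => ∑ i, w (g (inl i)) (g (inr i))
  refine ⟨f, fun i j hij => ⟨?_, ?_⟩⟩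
  · have := add_le_add_of_sum_le_sum_of_eq_off_pair hij (fun k hki hkj => by
      simp [Equiv.swap_apply_def, hki, hkj]) (hmax ((Equiv.swap (inr i) (inl j)).trans f))
    simpa [Equiv.swap_apply_def, hij, hij.symm] using this
  · have := add_le_add_of_sum_le_sum_of_eq_off_pair hij (fun k hki hkj => by
      simp [Equiv.swap_apply_def, hki, hkj]) (hmax ((Equiv.swap (inr i) (inr j)).trans f))
    simpa [Equiv.swap_apply_def, hij, hij.symm] using this

/-- The `i`-th edge of the matching on the values of `f : ι ⊕ ι → α` that joins the value at
`Sum.inl i` to the value at `Sum.inr i`. Perfect matchings of a set are encoded by bijections `f`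
onto it. -/
def matchingEdge (f : ι ⊕ ι → α) (i : ι) : Sym2 α :=
  s(f (.inl i), f (.inr i))

variable {f : ι ⊕ ι → α}

theorem mem_matchingEdge {i : ι} {x : α} :
    x ∈ matchingEdge f i ↔ x = f (.inl i) ∨ x = f (.inr i) :=
  Sym2.mem_iff

theorem exists_mem_matchingEdge (f : ι ⊕ ι → α) (k : ι ⊕ ι) : ∃ i, f k ∈ matchingEdge f i := by
  rcases k with i | i
  exacts [⟨i, Sym2.mem_mk_left _ _⟩, ⟨i, Sym2.mem_mk_right _ _⟩]

theorem mem_range_of_mem_matchingEdge {i : ι} {x : α} (hx : x ∈ matchingEdge f i) :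
    x ∈ range f := by
  rcases mem_matchingEdge.1 hx with rfl | rfl <;> exact mem_range_self _

theorem not_isDiag_matchingEdge (hf : f.Injective) (i : ι) : ¬ (matchingEdge f i).IsDiag :=
  fun h => Sum.inl_ne_inr (hf (Sym2.mk_isDiag_iff.1 h))

theorem ne_of_mem_matchingEdge (hf : f.Injective) {i j : ι} (hij : i ≠ j) {x y : α}
    (hx : x ∈ matchingEdge f i) (hy : y ∈ matchingEdge f j) : x ≠ y := by
  rcases mem_matchingEdge.1 hx with rfl | rfl <;>
  rcases mem_matchingEdge.1 hy with rfl | rfl <;>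
  exact hf.ne (by simp [hij])

theorem matchingEdge_injective (hf : f.Injective) : (matchingEdge f).Injective := by
  intro i j hedge
  by_contra hij
  have hmem : f (.inl i) ∈ matchingEdge f i := Sym2.mem_mk_left _ _
  exact ne_of_mem_matchingEdge hf hij hmem (hedge ▸ hmem) rfl

end Matching

theorem isStabbingFamily_image_matchingEdge {ι : Type*} [Fintype ι] [DecidableEq (Sym2 Pt)]
    {f : ι ⊕ ι → Pt} (hf : f.Injective)
    (hstab : ∀ i j, i ≠ j →
      (segLine (matchingEdge f i) ∩ segOpen (matchingEdge f j)).Nonempty ∨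
        (segLine (matchingEdge f j) ∩ segOpen (matchingEdge f i)).Nonempty) :
    IsStabbingFamily (Finset.univ.image (matchingEdge f)) := by
  simp only [IsStabbingFamily, Finset.forall_mem_image, Finset.mem_univ, true_imp_iff]
  refine ⟨fun i => not_isDiag_matchingEdge hf i, fun i j hne x hx y hy => ?_,
    fun i j hne => hstab i j (ne_of_apply_ne _ hne)⟩
  exact ne_of_mem_matchingEdge hf (ne_of_apply_ne _ hne) hx hy

theorem exists_stabbing_perfect_matching_general (n : ℕ) (P : Finset Pt)
    (hcard : P.card = 2 * n) :
    ∃ F : Finset (Sym2 Pt), F.card = n ∧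
      (∀ s ∈ F, ∀ x ∈ s, x ∈ P) ∧
      (∀ p ∈ P, ∃ s ∈ F, p ∈ s) ∧
      IsStabbingFamily F := by
  classical
  have e : Fin n ⊕ Fin n ≃ P := Fintype.equivOfCardEq (by simp [hcard, two_mul])
  obtain ⟨f, hmax⟩ := exists_equiv_exchange_le e fun p q => euclideanDist p q
  let v : Fin n ⊕ Fin n → Pt := fun k => f k
  have hv : v.Injective := Subtype.val_injective.comp f.injective
  refine ⟨Finset.univ.image (matchingEdge v), ?_, ?_, fun p hp => ?_, ?_⟩
  · rw [Finset.card_image_of_injective _ (matchingEdge_injective hv), Finset.card_fin]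
  · simp only [Finset.forall_mem_image]
    intro i _ x hx
    obtain ⟨k, rfl⟩ := mem_range_of_mem_matchingEdge hx
    exact (f k).2
  · obtain ⟨i, hi⟩ := exists_mem_matchingEdge v (f.symm ⟨p, hp⟩)
    exact ⟨_, Finset.mem_image_of_mem _ (Finset.mem_univ i), by simpa [v] using hi⟩
  · refine isStabbingFamily_image_matchingEdge hv fun i j hij => ?_
    obtain ⟨hle, hle'⟩ := hmax i j hij
    exact lineThrough_inter_openSegment_nonempty_of_exchange_le (hv.ne (by simp [hij]))
      (hv.ne (by simp)) (hv.ne (by simp)) (hv.ne (by simp [hij])) hle hle'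

theorem exists_stabbing_perfect_matching
    (n : ℕ) (hn : 0 < n) (P : Finset Pt) (hcard : P.card = 2 * n)
    (hgen : GenPos ↑P) :
    ∃ F : Finset (Sym2 Pt), F.card = n ∧
      (∀ s ∈ F, ∀ x ∈ s, x ∈ P) ∧
      (∀ p ∈ P, ∃ s ∈ F, p ∈ s) ∧
      IsStabbingFamily F :=
  exists_stabbing_perfect_matching_general n P hcard
end
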